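/- Let B := {z ∈ ℍ : ‖z‖ < 1} be the open unit ball of ℍ. If f : B → ℍ is real-analytic on B (as a map of ℝ⁴), pseudoconformal at every point of B, maps B into B, and satisfies f(0) = 0, then ‖f(z)‖ ≤ ‖z‖ for every z ∈ B. (Paper's Theorem 3.36, Schwarz-type lemma, for one quaternion variable; note that every ℍ-homogeneous norm on ℍ, i.e. a norm with ‖c z‖ = |c| ‖z‖ for all c ∈ ℍ, is a positive multiple of the Euclidean norm, so this is the full content of the theorem when n = m = 1.) -/

import Mathlib

open scoped Quaternion

/-- `f` is pseudoconformal at `ξ`: it is Fréchet differentiable over `ℝ` at `ξ` and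
its derivative has the form `h ↦ a * h * b` with nonzero quaternions `a`, `b`. -/
def Pseudoconformal (f : ℍ[ℝ] → ℍ[ℝ]) (ξ : ℍ[ℝ]) : Prop :=
  ∃ (A : ℍ[ℝ] →L[ℝ] ℍ[ℝ]) (a b : ℍ[ℝ]), a ≠ 0 ∧ b ≠ 0 ∧
    HasFDerivAt f A ξ ∧ ∀ h : ℍ[ℝ], A h = a * h * b

/-!
The argument is Nevanlinna's proof of Liouville's theorem on conformal maps. Let `σ = ‖Df‖⁻¹`.
Koszul's formula expresses `σ D²f` through `Df` and `∇ σ`. In dimension at least three, symmetry of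
`D³f` then forces `D(∇ σ) = k • id` with `k = ‖∇ σ‖² / (2 σ)` constant, so that `σ` is a quadratic
polynomial, and a second integration gives `σ x * σ y * ‖f x - f y‖² = ‖x - y‖²`.

For `f 0 = 0` this reads `σ 0 * σ x * ‖f x‖² = ‖x‖²`, with
`σ 0 * σ x = s² + 2 s ⟪p, x⟫ + ‖p‖² ‖x‖²` for `s = σ 0` and `p = ∇ σ 0 / 2`. Since `f` maps the ball
into itself, this polynomial exceeds `‖x‖²` there, which is only possible if `1 + ‖p‖ ≤ s`;
it is then at least `(s - ‖p‖ ‖x‖)² ≥ 1`.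
-/

open Module Filter Topology InnerProductSpace Metric
open scoped Gradient RealInnerProductSpace

section Algebra

variable {E F : Type*} [NormedAddCommGroup E] [InnerProductSpace ℝ E]
  [NormedAddCommGroup F] [InnerProductSpace ℝ F]

/-- The Christoffel symbol of the conformally flat metric `σ⁻² ⟪·, ·⟫`, multiplied by `σ`, in terms
of the gradient `g = ∇ σ`. -/
def conformalChristoffel (g l h : E) : E :=
  ⟪l, h⟫ • g - ⟪g, l⟫ • h - ⟪g, h⟫ • l

theorem conformalChristoffel_curvature (g l m h : E) :
    conformalChristoffel g m (conformalChristoffel g l h) - ⟪g, m⟫ • conformalChristoffel g l h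
      - (conformalChristoffel g l (conformalChristoffel g m h)
        - ⟪g, l⟫ • conformalChristoffel g m h)
      = ‖g‖ ^ 2 • (⟪m, h⟫ • l - ⟪l, h⟫ • m) := by
  simp only [conformalChristoffel, inner_sub_right, inner_smul_right, real_inner_self_eq_norm_sq,
    real_inner_comm l m, real_inner_comm m g, real_inner_comm l g]
  module

theorem sum_conformalChristoffel_basis {ι : Type*} [Fintype ι] (b : OrthonormalBasis ι ℝ E)
    (g : E) : ∑ i, conformalChristoffel g (b i) (b i) = (Fintype.card ι - 2 : ℝ) • g := by
  have expansion : ∑ i, ⟪g, b i⟫ • b i = g := by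
    simpa only [real_inner_comm] using b.sum_repr' g
  simp only [conformalChristoffel, real_inner_self_eq_norm_sq, b.norm_eq_one,
    Finset.sum_sub_distrib, expansion, Finset.sum_const, Finset.card_univ]
  module

theorem sum_conformalChristoffel_apply_basis {ι : Type*} [Fintype ι] (b : OrthonormalBasis ι ℝ E)
    {Q : E →ₗ[ℝ] E} (hQ : Q.IsSymmetric) (m : E) :
    ∑ i, conformalChristoffel (Q (b i)) m (b i) = -LinearMap.trace ℝ E Q • m := by
  have image_expansion : ∑ i, ⟪m, b i⟫ • Q (b i) = Q m := by
    simp_rw [← map_smul, ← map_sum, ← real_inner_comm m, b.sum_repr']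
  have expansion_image : ∑ i, ⟪Q (b i), m⟫ • b i = Q m := by
    simp_rw [hQ _ m, b.sum_repr']
  simp only [conformalChristoffel, Finset.sum_sub_distrib, image_expansion, expansion_image,
    ← Finset.sum_smul, Q.trace_eq_sum_inner b, real_inner_comm (b _) (Q (b _))]
  module

theorem eq_smul_of_conformalChristoffel_sub_eq [FiniteDimensional ℝ E] (hE : 3 ≤ finrank ℝ E)
    {Q : E →ₗ[ℝ] E} (hQ : Q.IsSymmetric) {c : ℝ}
    (h : ∀ m l k, conformalChristoffel (Q m) l k - conformalChristoffel (Q l) m k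
      = (2 * c) • (⟪l, k⟫ • m - ⟪m, k⟫ • l)) (m : E) : Q m = c • m := by
  have hn : (3 : ℝ) ≤ finrank ℝ E := mod_cast hE
  let b := stdOrthonormalBasis ℝ E
  have contraction (m : E) : (finrank ℝ E - 2 : ℝ) • Q m + LinearMap.trace ℝ E Q • m
      = (2 * c * (finrank ℝ E - 1)) • m := by
    have hsum := Finset.sum_congr rfl fun i (_ : i ∈ Finset.univ) => h m (b i) (b i)
    rw [Finset.sum_sub_distrib, sum_conformalChristoffel_basis,
      sum_conformalChristoffel_apply_basis b hQ, ← Finset.smul_sum, Finset.sum_sub_distrib] at hsum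
    simp only [real_inner_self_eq_norm_sq, b.norm_eq_one, ← real_inner_comm m, b.sum_repr',
      Finset.sum_const, Finset.card_univ, Fintype.card_fin] at hsum
    linear_combination (norm := module) hsum
  have trace_eq : LinearMap.trace ℝ E Q = c * finrank ℝ E := by
    have hmap : (finrank ℝ E - 2 : ℝ) • Q + LinearMap.trace ℝ E Q • LinearMap.id
        = (2 * c * (finrank ℝ E - 1)) • LinearMap.id := LinearMap.ext contraction
    have htrace := congrArg (LinearMap.trace ℝ E) hmap
    simp only [map_add, map_smul, smul_eq_mul, LinearMap.trace_id] at htrace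
    apply mul_left_cancel₀ (by linarith : (finrank ℝ E - 1 : ℝ) ≠ 0)
    linear_combination htrace / 2
  apply smul_right_injective E (by linarith : (finrank ℝ E - 2 : ℝ) ≠ 0)
  have := contraction m
  rw [trace_eq] at this
  linear_combination (norm := module) this

/-- The permutation argument behind Koszul's formula for the Christoffel symbols. -/
theorem inner_eq_of_inner_add_inner_eq {T : E → E → F} {A : E → F} {s : E → ℝ}
    (hsymm : ∀ l h, T l h = T h l)
    (hT : ∀ l h k, ⟪T l h, A k⟫ + ⟪A h, T l k⟫ = 2 * (s l * ⟪h, k⟫)) (l h k : E) :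
    ⟪T l h, A k⟫ = s l * ⟪h, k⟫ + s h * ⟪l, k⟫ - s k * ⟪l, h⟫ := by
  have hlh := hT l h k
  have hhl := hT h l k
  have hkl := hT k l h
  rw [hsymm h l] at hhl
  rw [hsymm k l, hsymm k h] at hkl
  linarith [real_inner_comm (T l k) (A h), real_inner_comm (T h k) (A l)]

theorem conformalChristoffel_smul_sub_smul {g : E} {s k : ℝ} (hg : ‖g‖ ^ 2 = 2 * s * k)
    (l v : E) :
    conformalChristoffel g l (s • v - (‖v‖ ^ 2 / 2) • g)
      + s • (⟪g, l⟫ • v + s • l - (⟪v, l⟫ • g + (‖v‖ ^ 2 / 2 * k) • l))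
      = (s * (s - ⟪g, v⟫ + k / 2 * ‖v‖ ^ 2)) • l := by
  simp only [conformalChristoffel, inner_sub_right, real_inner_smul_right,
    real_inner_self_eq_norm_sq, hg, real_inner_comm v l, real_inner_comm g l]
  module

theorem norm_smul_sub_smul_sq {g : E} {s k : ℝ} (hg : ‖g‖ ^ 2 = 2 * s * k) (v : E) :
    ‖s • v - (‖v‖ ^ 2 / 2) • g‖ ^ 2 = s * (s - ⟪g, v⟫ + k / 2 * ‖v‖ ^ 2) * ‖v‖ ^ 2 := by
  simp only [norm_sub_sq_real, norm_smul, mul_pow, Real.norm_eq_abs, sq_abs,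
    real_inner_smul_left, real_inner_smul_right, real_inner_comm g v]
  linear_combination (‖v‖ ^ 2 / 2) ^ 2 * hg

end Algebra

section Gradient

variable {E : Type*} [NormedAddCommGroup E] [InnerProductSpace ℝ E] [CompleteSpace E]
  {φ : E → ℝ} {x : E}

theorem differentiableAt_gradient (h : DifferentiableAt ℝ (fderiv ℝ φ) x) :
    DifferentiableAt ℝ (∇ φ) x :=
  (toDual ℝ E).symm.toContinuousLinearEquiv.toContinuousLinearMap.differentiableAt.comp x h

theorem inner_fderiv_gradient (h : DifferentiableAt ℝ (fderiv ℝ φ) x) (m l : E) :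
    ⟪fderiv ℝ (∇ φ) x m, l⟫ = fderiv ℝ (fderiv ℝ φ) x m l := by
  have hgrad := (differentiableAt_gradient h).hasFDerivAt.inner ℝ (hasFDerivAt_const l x)
  have hdual := h.hasFDerivAt.clm_apply (hasFDerivAt_const l x)
  simp only [inner_gradient_left] at hgrad
  simpa using DFunLike.congr_fun (hgrad.unique hdual) m

end Gradient

theorem eq_of_hasFDerivAt_zero {E F : Type*} [NormedAddCommGroup E] [NormedSpace ℝ E]
    [NormedAddCommGroup F] [NormedSpace ℝ F] {φ : E → F} {U : Set E} {x y : E}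
    (hU : IsOpen U) (hU' : IsPreconnected U) (hφ : ∀ z ∈ U, HasFDerivAt φ (0 : E →L[ℝ] F) z)
    (hx : x ∈ U) (hy : y ∈ U) : φ x = φ y :=
  hU.is_const_of_fderiv_eq_zero (𝕜 := ℝ) hU'
    (fun z hz => (hφ z hz).differentiableAt.differentiableWithinAt)
    (fun z hz => (hφ z hz).fderiv) hx hy

section ConformalMaps

variable {E F : Type*} [NormedAddCommGroup E] [InnerProductSpace ℝ E] [Nontrivial E]
  [NormedAddCommGroup F] [InnerProductSpace ℝ F] {f : E → F} {x : E} {n : WithTop ℕ∞}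

/-- The reciprocal of the dilation factor `‖fderiv ℝ f x‖` of a conformal map. Where the derivative
vanishes the value is `0`. -/
noncomputable def invDilation (f : E → F) (x : E) : ℝ := ‖fderiv ℝ f x‖⁻¹

theorem invDilation_pos (hconf : ConformalAt f x) : 0 < invDilation f x :=
  inv_pos.mpr <| norm_pos_iff.mpr (conformalAt_iff_isConformalMap_fderiv.mp hconf).ne_zero

theorem invDilation_sq_mul_inner (hconf : ConformalAt f x) (h k : E) :
    invDilation f x ^ 2 * ⟪fderiv ℝ f x h, fderiv ℝ f x k⟫ = ⟪h, k⟫ := by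
  obtain ⟨c, hc, li, hli⟩ := conformalAt_iff_isConformalMap_fderiv.mp hconf
  simp only [invDilation, hli, norm_smul, li.norm_toContinuousLinearMap, smul_apply,
    LinearIsometry.coe_toContinuousLinearMap, real_inner_smul_left, real_inner_smul_right,
    li.inner_map_map, mul_one, inv_pow, Real.norm_eq_abs, sq_abs]
  field_simp

theorem invDilation_mul_norm (hconf : ConformalAt f x) (h : E) :
    invDilation f x * ‖fderiv ℝ f x h‖ = ‖h‖ := by
  have hsq := invDilation_sq_mul_inner hconf h h
  rw [real_inner_self_eq_norm_sq, real_inner_self_eq_norm_sq, ← mul_pow] at hsq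
  exact (sq_eq_sq₀ (mul_nonneg (invDilation_pos hconf).le (norm_nonneg _)) (norm_nonneg _)).mp hsq

theorem contDiffAt_invDilation (hf : ContDiffAt ℝ (n + 1) f x)
    (hconf : ∀ᶠ y in 𝓝 x, ConformalAt f y) : ContDiffAt ℝ n (invDilation f) x := by
  obtain ⟨e, he⟩ := exists_norm_eq E zero_le_one
  have hfderiv : ContDiffAt ℝ n (fun y => fderiv ℝ f y e) x :=
    (hf.fderiv_right le_rfl).clm_apply contDiffAt_const
  have hunit {y : E} (hy : ConformalAt f y) : invDilation f y = ‖fderiv ℝ f y e‖⁻¹ :=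
    eq_inv_of_mul_eq_one_left ((invDilation_mul_norm hy e).trans he)
  have hne : ‖fderiv ℝ f x e‖ ≠ 0 := fun h0 => by
    simpa [h0, he] using invDilation_mul_norm hconf.self_of_nhds e
  exact ((hfderiv.norm ℝ (norm_ne_zero_iff.mp hne)).inv hne).congr_of_eventuallyEq
    (hconf.mono fun y hy => hunit hy)

theorem differentiableAt_fderiv_invDilation (hf : ContDiffAt ℝ 3 f x)
    (hconf : ∀ᶠ y in 𝓝 x, ConformalAt f y) :
    DifferentiableAt ℝ (fderiv ℝ (invDilation f)) x :=
  ((contDiffAt_invDilation (n := 2) hf hconf).fderiv_right (m := 1) le_rfl).differentiableAt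
    one_ne_zero

theorem inner_fderiv_fderiv_add_inner (hf : ContDiffAt ℝ 2 f x)
    (hconf : ∀ᶠ y in 𝓝 x, ConformalAt f y) (l h k : E) :
    ⟪fderiv ℝ (fderiv ℝ f) x l h, fderiv ℝ f x k⟫
      + ⟪fderiv ℝ f x h, fderiv ℝ (fderiv ℝ f) x l k⟫
      = 2 * (-(fderiv ℝ (invDilation f) x l / invDilation f x ^ 3) * ⟪h, k⟫) := by
  have hσ := ((contDiffAt_invDilation (n := 1) hf hconf).differentiableAt
    one_ne_zero).hasFDerivAt
  have hσ_pos := invDilation_pos hconf.self_of_nhds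
  have hDf (v : E) := ((hf.fderiv_right (m := 1) le_rfl).differentiableAt
    one_ne_zero).hasFDerivAt.clm_apply (hasFDerivAt_const v x)
  have hisometry : (fun y => invDilation f y ^ 2 * ⟪fderiv ℝ f y h, fderiv ℝ f y k⟫)
      =ᶠ[𝓝 x] fun _ => ⟪h, k⟫ := hconf.mono fun y hy => invDilation_sq_mul_inner hy h k
  have hderiv := ((hσ.pow 2).mul ((hDf h).inner ℝ (hDf k))).unique
    ((hasFDerivAt_const _ x).congr_of_eventuallyEq hisometry)
  have hderiv_l : invDilation f x ^ 2 * (⟪fderiv ℝ f x h, fderiv ℝ (fderiv ℝ f) x l k⟫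
      + ⟪fderiv ℝ (fderiv ℝ f) x l h, fderiv ℝ f x k⟫)
      + ⟪fderiv ℝ f x h, fderiv ℝ f x k⟫
        * (2 * invDilation f x * fderiv ℝ (invDilation f) x l) = 0 := by
    simpa [fderivInnerCLM_apply] using DFunLike.congr_fun hderiv l
  rw [← invDilation_sq_mul_inner hconf.self_of_nhds h k]
  field_simp
  apply mul_left_cancel₀ hσ_pos.ne'
  linear_combination hderiv_l

end ConformalMaps

section Liouville

variable {E : Type*} [NormedAddCommGroup E] [InnerProductSpace ℝ E] [FiniteDimensional ℝ E]
  [Nontrivial E] {f : E → E} {U : Set E} {x y : E}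

theorem invDilation_smul_fderiv_fderiv (hf : ContDiffAt ℝ 2 f x)
    (hconf : ∀ᶠ y in 𝓝 x, ConformalAt f y) (l h : E) :
    invDilation f x • fderiv ℝ (fderiv ℝ f) x l h
      = fderiv ℝ f x (conformalChristoffel (∇ (invDilation f) x) l h) := by
  have hσ_pos := invDilation_pos hconf.self_of_nhds
  have hsurj : Function.Surjective (fderiv ℝ f x) :=
    LinearMap.injective_iff_surjective.mp
      (conformalAt_iff_isConformalMap_fderiv.mp hconf.self_of_nhds).injective
  refine ext_inner_right ℝ fun v => ?_
  obtain ⟨k, rfl⟩ := hsurj v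
  have hsymm := hf.isSymmSndFDerivAt (by simp)
  have koszul := inner_eq_of_inner_add_inner_eq (fun l h => hsymm l h)
    (fun l h k => inner_fderiv_fderiv_add_inner hf hconf l h k) l h k
  have isometry := invDilation_sq_mul_inner hconf.self_of_nhds
    (conformalChristoffel (∇ (invDilation f) x) l h) k
  rw [real_inner_smul_left, koszul]
  apply mul_left_cancel₀ (pow_ne_zero 2 hσ_pos.ne')
  rw [isometry]
  simp only [conformalChristoffel, inner_sub_left, real_inner_smul_left, inner_gradient_left]
  field_simp
  ring

theorem invDilation_smul_fderiv_fderiv_fderiv (hf : ContDiffAt ℝ 3 f x)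
    (hconf : ∀ᶠ y in 𝓝 x, ConformalAt f y) (m l h : E) :
    invDilation f x ^ 2 • fderiv ℝ (fderiv ℝ (fderiv ℝ f)) x m l h = fderiv ℝ f x
      (conformalChristoffel (∇ (invDilation f) x) m
          (conformalChristoffel (∇ (invDilation f) x) l h)
        + invDilation f x • conformalChristoffel (fderiv ℝ (∇ (invDilation f)) x m) l h
        - ⟪∇ (invDilation f) x, m⟫ • conformalChristoffel (∇ (invDilation f) x) l h) := by
  have hDf : ContDiffAt ℝ 2 (fderiv ℝ f) x := hf.fderiv_right le_rfl
  have hDDf : ContDiffAt ℝ 1 (fderiv ℝ (fderiv ℝ f)) x := hDf.fderiv_right le_rfl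
  have hσ := contDiffAt_invDilation (n := 2) hf hconf
  have hg := (differentiableAt_gradient (differentiableAt_fderiv_invDilation hf hconf)).hasFDerivAt
  have hΓ := (((hg.const_smul ⟪l, h⟫).sub ((hg.inner ℝ (hasFDerivAt_const l x)).smul_const h)).sub
    ((hg.inner ℝ (hasFDerivAt_const h x)).smul_const l))
  have hleft := (hσ.differentiableAt two_ne_zero).hasFDerivAt.smul
    (((hDDf.differentiableAt one_ne_zero).hasFDerivAt.clm_apply
      (hasFDerivAt_const l x)).clm_apply (hasFDerivAt_const h x))
  have hright := (hDf.differentiableAt two_ne_zero).hasFDerivAt.clm_apply hΓ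
  have heq : (fun y => invDilation f y • fderiv ℝ (fderiv ℝ f) y l h) =ᶠ[𝓝 x]
      fun y => fderiv ℝ f y (conformalChristoffel (∇ (invDilation f) y) l h) := by
    filter_upwards [hf.eventually (by simp), hconf.eventually_nhds] with y hfy hconfy
    exact invDilation_smul_fderiv_fderiv (hfy.of_le (by norm_num)) hconfy l h
  have hderiv := hleft.unique (hright.congr_of_eventuallyEq heq)
  have hderiv_m : invDilation f x • fderiv ℝ (fderiv ℝ (fderiv ℝ f)) x m l h
      + ⟪∇ (invDilation f) x, m⟫ • fderiv ℝ (fderiv ℝ f) x l h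
      = fderiv ℝ f x (conformalChristoffel (fderiv ℝ (∇ (invDilation f)) x m) l h)
        + fderiv ℝ (fderiv ℝ f) x m (conformalChristoffel (∇ (invDilation f) x) l h) := by
    simpa [conformalChristoffel, inner_gradient_left] using DFunLike.congr_fun hderiv m
  have second_derivative (v w : E) :=
    invDilation_smul_fderiv_fderiv (hf.of_le (by norm_num)) hconf v w
  rw [pow_two, mul_smul, eq_sub_of_add_eq hderiv_m, smul_sub, smul_add, second_derivative,
    smul_comm _ ⟪_, m⟫, second_derivative]
  simp only [map_add, map_sub, map_smul]
  abel

/-- The factor `k` for which the Hessian of `σ = invDilation f` is `k • id` when `f` is conformal in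
dimension at least three. -/
noncomputable def hessianFactor (f : E → E) (x : E) : ℝ :=
  ‖∇ (invDilation f) x‖ ^ 2 / (2 * invDilation f x)

theorem norm_gradient_invDilation_sq (hconf : ConformalAt f x) :
    ‖∇ (invDilation f) x‖ ^ 2 = 2 * invDilation f x * hessianFactor f x := by
  have hσ_ne := (invDilation_pos hconf).ne'
  rw [hessianFactor]
  field_simp

theorem isSymmetric_fderiv_gradient_invDilation (hf : ContDiffAt ℝ 3 f x)
    (hconf : ∀ᶠ y in 𝓝 x, ConformalAt f y) :
    (fderiv ℝ (∇ (invDilation f)) x : E →ₗ[ℝ] E).IsSymmetric := fun l m => by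
  have hσ := contDiffAt_invDilation (n := 2) hf hconf
  have hdiff := differentiableAt_fderiv_invDilation hf hconf
  rw [← real_inner_comm l]
  exact (inner_fderiv_gradient hdiff l m).trans <|
    (hσ.isSymmSndFDerivAt (by simp) l m).trans (inner_fderiv_gradient hdiff m l).symm

theorem conformalChristoffel_fderiv_gradient_sub (hf : ContDiffAt ℝ 3 f x)
    (hconf : ∀ᶠ y in 𝓝 x, ConformalAt f y) (m l h : E) :
    conformalChristoffel (fderiv ℝ (∇ (invDilation f)) x m) l h
      - conformalChristoffel (fderiv ℝ (∇ (invDilation f)) x l) m h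
      = (2 * hessianFactor f x) • (⟪l, h⟫ • m - ⟪m, h⟫ • l) := by
  have hσ_ne := (invDilation_pos hconf.self_of_nhds).ne'
  have hDf : ContDiffAt ℝ 2 (fderiv ℝ f) x := hf.fderiv_right le_rfl
  have integrability := congrArg (invDilation f x ^ 2 • ·)
    (DFunLike.congr_fun ((hDf.isSymmSndFDerivAt (by simp)).eq m l) h)
  simp only [invDilation_smul_fderiv_fderiv_fderiv hf hconf] at integrability
  have integrability_domain :=
    (conformalAt_iff_isConformalMap_fderiv.mp hconf.self_of_nhds).injective integrability
  have curvature := conformalChristoffel_curvature (∇ (invDilation f) x) l m h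
  have factor : invDilation f x * (2 * hessianFactor f x) = ‖∇ (invDilation f) x‖ ^ 2 := by
    linear_combination -norm_gradient_invDilation_sq hconf.self_of_nhds
  apply smul_right_injective E hσ_ne
  simp only [smul_smul, factor]
  linear_combination (norm := module) integrability_domain - curvature

theorem hasFDerivAt_gradient_invDilation (hE : 3 ≤ finrank ℝ E) (hf : ContDiffAt ℝ 3 f x)
    (hconf : ∀ᶠ y in 𝓝 x, ConformalAt f y) :
    HasFDerivAt (∇ (invDilation f)) (hessianFactor f x • ContinuousLinearMap.id ℝ E) x :=
  have hg := differentiableAt_gradient (differentiableAt_fderiv_invDilation hf hconf)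
  hg.hasFDerivAt.congr_fderiv <| ContinuousLinearMap.ext <|
    eq_smul_of_conformalChristoffel_sub_eq hE (isSymmetric_fderiv_gradient_invDilation hf hconf)
      (conformalChristoffel_fderiv_gradient_sub hf hconf)

theorem hasGradientAt_invDilation (hf : ContDiffAt ℝ 2 f x)
    (hconf : ∀ᶠ y in 𝓝 x, ConformalAt f y) :
    HasGradientAt (invDilation f) (∇ (invDilation f) x) x :=
  ((contDiffAt_invDilation (n := 1) hf hconf).differentiableAt one_ne_zero).hasGradientAt

theorem hasFDerivAt_hessianFactor (hE : 3 ≤ finrank ℝ E) (hf : ContDiffAt ℝ 3 f x)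
    (hconf : ∀ᶠ y in 𝓝 x, ConformalAt f y) :
    HasFDerivAt (hessianFactor f) (0 : E →L[ℝ] ℝ) x := by
  have hσ_ne := (invDilation_pos hconf.self_of_nhds).ne'
  have hσ := (hasGradientAt_invDilation (hf.of_le (by norm_num)) hconf).hasFDerivAt
  have hg := hasFDerivAt_gradient_invDilation hE hf hconf
  have hinv := (hasDerivAt_inv (mul_ne_zero two_ne_zero hσ_ne)).comp_hasFDerivAt x
    (hσ.const_mul 2)
  refine (hg.norm_sq.mul hinv).congr_fderiv (ContinuousLinearMap.ext fun l => ?_)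
  simp only [hessianFactor, toDual_gradient, Function.comp_apply, ContinuousLinearMap.comp_smulₛₗ,
    Real.ringHom_apply, ContinuousLinearMap.comp_id, add_apply, smul_apply, smul_eq_mul,
    coe_innerSL_apply, inner_gradient_left, nsmul_eq_mul, Nat.cast_ofNat, zero_apply]
  field_simp
  ring

/-- For a Möbius map `f` the function differentiated here is `invDilation f y • (f z - f y)`. -/
theorem hasFDerivAt_fderiv_apply_smul_sub_smul (hE : 3 ≤ finrank ℝ E) (hf : ContDiffAt ℝ 3 f x)
    (hconf : ∀ᶠ z in 𝓝 x, ConformalAt f z) (y : E) :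
    HasFDerivAt (fun z => fderiv ℝ f z
        (invDilation f z • (z - y) - (‖z - y‖ ^ 2 / 2) • ∇ (invDilation f) z))
      ((invDilation f x - ⟪∇ (invDilation f) x, x - y⟫ + hessianFactor f x / 2 * ‖x - y‖ ^ 2) •
        fderiv ℝ f x) x := by
  have hf₂ : ContDiffAt ℝ 2 f x := hf.of_le (by norm_num)
  have hσ := (hasGradientAt_invDilation hf₂ hconf).hasFDerivAt
  have hg := hasFDerivAt_gradient_invDilation hE hf hconf
  have hDf := ((hf₂.fderiv_right (m := 1) le_rfl).differentiableAt one_ne_zero).hasFDerivAt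
  have hsub := (hasFDerivAt_id (𝕜 := ℝ) x).sub_const y
  have hw := (hσ.smul hsub).sub ((hsub.norm_sq.mul_const 2⁻¹).smul hg)
  refine (hDf.clm_apply hw).congr_fderiv (ContinuousLinearMap.ext fun l => ?_)
  have hcancel := congrArg (fderiv ℝ f x) <| conformalChristoffel_smul_sub_smul
    (norm_gradient_invDilation_sq hconf.self_of_nhds) l (x - y)
  rw [map_add, ← invDilation_smul_fderiv_fderiv hf₂ hconf] at hcancel
  apply smul_right_injective E (invDilation_pos hconf.self_of_nhds).ne'
  simp only [id_eq, ContinuousLinearMap.comp_id, Pi.sub_apply, Pi.smul_apply', add_apply, sub_apply,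
    smul_apply, ContinuousLinearMap.comp_apply, ContinuousLinearMap.smulRight_apply,
    ContinuousLinearMap.id_apply, ContinuousLinearMap.flip_apply, toDual_apply_apply,
    coe_innerSL_apply, smul_eq_mul]
  simp only [map_add, map_sub, map_smul] at hcancel ⊢
  linear_combination (norm := module) hcancel

section Preconnected

variable (hE : 3 ≤ finrank ℝ E) (hU : IsOpen U) (hU' : IsPreconnected U)
  (hf : ContDiffOn ℝ 3 f U) (hconf : ∀ z ∈ U, ConformalAt f z)
include hE hU hU' hf hconf

theorem hessianFactor_eq (hx : x ∈ U) (hy : y ∈ U) :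
    hessianFactor f x = hessianFactor f y :=
  eq_of_hasFDerivAt_zero hU hU' (fun _ hz => hasFDerivAt_hessianFactor hE
    (hf.contDiffAt (hU.mem_nhds hz)) (eventually_of_mem (hU.mem_nhds hz) hconf)) hx hy

theorem gradient_invDilation_eq (hx : x ∈ U) (hy : y ∈ U) :
    ∇ (invDilation f) x = ∇ (invDilation f) y + hessianFactor f y • (x - y) := by
  have hderiv (z : E) (hz : z ∈ U) :
      HasFDerivAt (fun z => ∇ (invDilation f) z - hessianFactor f y • (z - y))
        (0 : E →L[ℝ] E) z := by
    have hg := hasFDerivAt_gradient_invDilation hE (hf.contDiffAt (hU.mem_nhds hz))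
      (eventually_of_mem (hU.mem_nhds hz) hconf)
    rw [hessianFactor_eq hE hU hU' hf hconf hz hy] at hg
    exact (hg.sub (((hasFDerivAt_id z).sub_const y).const_smul _)).congr_fderiv (sub_self _)
  have hconst := eq_of_hasFDerivAt_zero hU hU' hderiv hx hy
  rwa [sub_self, smul_zero, sub_zero, sub_eq_iff_eq_add] at hconst

theorem invDilation_eq (hx : x ∈ U) (hy : y ∈ U) :
    invDilation f x = invDilation f y + ⟪∇ (invDilation f) y, x - y⟫
      + hessianFactor f y / 2 * ‖x - y‖ ^ 2 := by
  have hderiv (z : E) (hz : z ∈ U) :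
      HasFDerivAt (fun z => invDilation f z - ⟪∇ (invDilation f) y, z - y⟫
        - hessianFactor f y / 2 * ‖z - y‖ ^ 2) (0 : E →L[ℝ] ℝ) z := by
    have hσ := (hasGradientAt_invDilation ((hf.contDiffAt (hU.mem_nhds hz)).of_le (by norm_num))
      (eventually_of_mem (hU.mem_nhds hz) hconf)).hasFDerivAt
    have hsub := (hasFDerivAt_id (𝕜 := ℝ) z).sub_const y
    refine ((hσ.sub ((hasFDerivAt_const (∇ (invDilation f) y) z).inner ℝ hsub)).sub
      (hsub.norm_sq.const_mul (hessianFactor f y / 2))).congr_fderiv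
      (ContinuousLinearMap.ext fun l => ?_)
    simp only [gradient_invDilation_eq hE hU hU' hf hconf hz hy, map_add, toDual_gradient, map_smul,
      id_eq, ContinuousLinearMap.comp_id, sub_apply, add_apply, smul_apply, toDual_apply_apply,
      smul_eq_mul, ContinuousLinearMap.comp_apply, ContinuousLinearMap.prod_apply, zero_apply,
      ContinuousLinearMap.id_apply, fderivInnerCLM_apply, inner_gradient_left, inner_zero_left,
      add_zero, coe_innerSL_apply, nsmul_eq_mul, Nat.cast_ofNat]
    ring
  have hconst := eq_of_hasFDerivAt_zero hU hU' hderiv hx hy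
  simp only [sub_self, inner_zero_right, norm_zero] at hconst
  linarith

theorem invDilation_eq_sub (hx : x ∈ U) (hy : y ∈ U) :
    invDilation f x = invDilation f y - ⟪∇ (invDilation f) y, y - x⟫
      + hessianFactor f y / 2 * ‖y - x‖ ^ 2 := by
  rw [invDilation_eq hE hU hU' hf hconf hx hy, ← neg_sub y x, inner_neg_right, norm_neg,
    ← sub_eq_add_neg]

theorem invDilation_mul_invDilation (hx : x ∈ U) (hy : y ∈ U) :
    invDilation f x * invDilation f y = invDilation f y ^ 2
      + 2 * invDilation f y * ⟪(2⁻¹ : ℝ) • ∇ (invDilation f) y, x - y⟫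
      + ‖(2⁻¹ : ℝ) • ∇ (invDilation f) y‖ ^ 2 * ‖x - y‖ ^ 2 := by
  rw [invDilation_eq hE hU hU' hf hconf hx hy, norm_smul, mul_pow,
    norm_gradient_invDilation_sq (hconf y hy), real_inner_smul_left,
    Real.norm_of_nonneg (by norm_num)]
  ring

theorem invDilation_smul_sub_eq_fderiv (hx : x ∈ U) (hy : y ∈ U) :
    invDilation f y • (f x - f y) = fderiv ℝ f x
      (invDilation f x • (x - y) - (‖x - y‖ ^ 2 / 2) • ∇ (invDilation f) x) := by
  have hderiv (z : E) (hz : z ∈ U) :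
      HasFDerivAt (fun z => invDilation f y • f z - fderiv ℝ f z
        (invDilation f z • (z - y) - (‖z - y‖ ^ 2 / 2) • ∇ (invDilation f) z))
        (0 : E →L[ℝ] E) z := by
    have hfz : ContDiffAt ℝ 3 f z := hf.contDiffAt (hU.mem_nhds hz)
    have hright := hasFDerivAt_fderiv_apply_smul_sub_smul hE hfz
      (eventually_of_mem (hU.mem_nhds hz) hconf) y
    rw [← invDilation_eq_sub hE hU hU' hf hconf hy hz] at hright
    exact (((hfz.differentiableAt three_ne_zero).hasFDerivAt.const_smul
      (invDilation f y)).sub hright).congr_fderiv (sub_self _)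
  have hconst := eq_of_hasFDerivAt_zero hU hU' hderiv hx hy
  simp only [sub_self, norm_zero, smul_zero, ne_eq, OfNat.ofNat_ne_zero, not_false_eq_true,
    zero_pow, zero_div, zero_smul, map_zero, sub_zero] at hconst
  rw [smul_sub, ← hconst, sub_sub_cancel]

theorem invDilation_mul_invDilation_mul_norm_sub_sq (hx : x ∈ U) (hy : y ∈ U) :
    invDilation f x * invDilation f y * ‖f x - f y‖ ^ 2 = ‖x - y‖ ^ 2 := by
  have hσx := invDilation_pos (hconf x hx)
  have hσy := invDilation_pos (hconf y hy)
  have hnorm := invDilation_mul_norm (hconf x hx)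
    (invDilation f x • (x - y) - (‖x - y‖ ^ 2 / 2) • ∇ (invDilation f) x)
  rw [← invDilation_smul_sub_eq_fderiv hE hU hU' hf hconf hx hy, norm_smul,
    Real.norm_of_nonneg hσy.le] at hnorm
  have hsq := norm_smul_sub_smul_sq (norm_gradient_invDilation_sq (hconf x hx)) (x - y)
  rw [← hnorm, ← invDilation_eq_sub hE hU hU' hf hconf hy hx] at hsq
  apply mul_left_cancel₀ (mul_pos hσx hσy).ne'
  linear_combination hsq

end Preconnected

end Liouville

section SelfMaps

variable {E : Type*} [NormedAddCommGroup E] [InnerProductSpace ℝ E]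

theorem one_add_norm_le_of_norm_sq_lt [Nontrivial E] {p : E} {s : ℝ} (hs : 0 < s)
    (h : ∀ x, ‖x‖ < 1 → ‖x‖ ^ 2 < s ^ 2 + 2 * s * ⟪p, x⟫ + ‖p‖ ^ 2 * ‖x‖ ^ 2) : 1 + ‖p‖ ≤ s := by
  by_contra! hlt
  have hpos : 0 < 1 + ‖p‖ := by positivity
  obtain ⟨u, hu, hpu⟩ : ∃ u : E, ‖u‖ = 1 ∧ ⟪p, u⟫ = -‖p‖ := by
    rcases eq_or_ne p 0 with rfl | hp
    · simpa using exists_norm_eq E zero_le_one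
    · refine ⟨-(‖p‖⁻¹ • p), by simp [norm_smul, hp], ?_⟩
      rw [inner_neg_right, real_inner_smul_right, real_inner_self_eq_norm_sq]
      field_simp
  -- Along `u` the quadratic polynomial is `(s - ‖p‖ t) ^ 2`, which equals `t ^ 2` at this `t`.
  obtain ⟨t, ht, rfl⟩ : ∃ t : ℝ, 0 < t ∧ s = (1 + ‖p‖) * t :=
    ⟨s / (1 + ‖p‖), by positivity, by field_simp⟩
  have htu : ‖t • u‖ = t := by rw [norm_smul, hu, mul_one, Real.norm_of_nonneg ht.le]
  have ht_lt : t < 1 := (mul_lt_iff_lt_one_right hpos).mp hlt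
  have hlt_self := h (t • u) (htu.trans_lt ht_lt)
  rw [htu, real_inner_smul_right, hpu] at hlt_self
  linarith

theorem one_le_sq_add_inner_add {p x : E} {s : ℝ} (hs : 1 + ‖p‖ ≤ s) (hx : ‖x‖ ≤ 1) :
    1 ≤ s ^ 2 + 2 * s * ⟪p, x⟫ + ‖p‖ ^ 2 * ‖x‖ ^ 2 := by
  have hpx : ‖p‖ * ‖x‖ ≤ ‖p‖ := mul_le_of_le_one_right (norm_nonneg p) hx
  have hinner : -(‖p‖ * ‖x‖) ≤ ⟪p, x⟫ := (abs_le.mp (abs_real_inner_le_norm p x)).1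
  have hs_pos : 0 ≤ s := by linarith [norm_nonneg p]
  calc 1 ≤ (s - ‖p‖ * ‖x‖) ^ 2 := one_le_pow₀ (by linarith)
    _ = s ^ 2 + 2 * s * -(‖p‖ * ‖x‖) + ‖p‖ ^ 2 * ‖x‖ ^ 2 := by ring
    _ ≤ s ^ 2 + 2 * s * ⟪p, x⟫ + ‖p‖ ^ 2 * ‖x‖ ^ 2 := by gcongr

end SelfMaps

theorem Pseudoconformal.conformalAt {f : ℍ[ℝ] → ℍ[ℝ]} {ξ : ℍ[ℝ]} (h : Pseudoconformal f ξ) :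
    ConformalAt f ξ := by
  obtain ⟨A, a, b, ha, hb, hA, hAab⟩ := h
  have hscale : ‖a‖ * ‖b‖ ≠ 0 := by positivity
  let li : ℍ[ℝ] →ₗᵢ[ℝ] ℍ[ℝ] :=
    { toLinearMap := (‖a‖ * ‖b‖)⁻¹ • (A : ℍ[ℝ] →ₗ[ℝ] ℍ[ℝ])
      norm_map' := fun h => by
        simp only [LinearMap.smul_apply, ContinuousLinearMap.coe_coe, hAab, norm_smul, norm_mul,
          norm_inv, norm_norm]
        field_simp }
  refine ⟨A, hA, ‖a‖ * ‖b‖, hscale, li, ?_⟩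
  ext1 h
  exact (smul_inv_smul₀ hscale (A h)).symm

theorem stmt_17_general {E : Type*} [NormedAddCommGroup E] [InnerProductSpace ℝ E]
    [FiniteDimensional ℝ E] (hE : 3 ≤ finrank ℝ E) (f : E → E)
    (hf : ContDiffOn ℝ 3 f (ball 0 1)) (hconf : ∀ x ∈ ball (0 : E) 1, ConformalAt f x)
    (hmaps : Set.MapsTo f (ball 0 1) (ball 0 1)) (h0 : f 0 = 0) :
    ∀ z ∈ ball (0 : E) 1, ‖f z‖ ≤ ‖z‖ := by
  have : Nontrivial E := nontrivial_of_finrank_pos (R := ℝ) (by lia)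
  have hball := (convex_ball (0 : E) 1).isPreconnected
  have hzero : (0 : E) ∈ ball 0 1 := mem_ball_self one_pos
  have hσ₀ := invDilation_pos (hconf 0 hzero)
  have dilation (x : E) (hx : x ∈ ball 0 1) :
      invDilation f x * invDilation f 0 * ‖f x‖ ^ 2 = ‖x‖ ^ 2 := by
    simpa only [h0, sub_zero] using
      invDilation_mul_invDilation_mul_norm_sub_sq hE isOpen_ball hball hf hconf hx hzero
  let p : E := (2⁻¹ : ℝ) • ∇ (invDilation f) 0
  have quadratic (x : E) (hx : x ∈ ball 0 1) : invDilation f x * invDilation f 0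
      = invDilation f 0 ^ 2 + 2 * invDilation f 0 * ⟪p, x⟫ + ‖p‖ ^ 2 * ‖x‖ ^ 2 := by
    simpa only [sub_zero] using
      invDilation_mul_invDilation hE isOpen_ball hball hf hconf hx hzero
  have hp_le : 1 + ‖p‖ ≤ invDilation f 0 := one_add_norm_le_of_norm_sq_lt hσ₀ fun x hx => by
    have hx' : x ∈ ball 0 1 := mem_ball_zero_iff.mpr hx
    have hfx : ‖f x‖ < 1 := mem_ball_zero_iff.mp (hmaps hx')
    rw [← quadratic x hx', ← dilation x hx']
    exact mul_lt_of_lt_one_right (mul_pos (invDilation_pos (hconf x hx')) hσ₀)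
      (pow_lt_one₀ (norm_nonneg _) hfx two_ne_zero)
  intro z hz
  have hone := one_le_sq_add_inner_add hp_le (mem_ball_zero_iff.mp hz).le
  rw [← quadratic z hz] at hone
  apply (sq_le_sq₀ (norm_nonneg _) (norm_nonneg _)).mp
  exact (le_mul_of_one_le_left (sq_nonneg _) hone).trans_eq (dilation z hz)

/-- Paper's Theorem 3.36 (Schwarz-type lemma) for one quaternion variable:
a real-analytic pseudoconformal self-map of the open unit ball of `ℍ` fixing `0`
satisfies `‖f z‖ ≤ ‖z‖`. -/
theorem stmt_17 (f : ℍ[ℝ] → ℍ[ℝ])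
    (han : AnalyticOnNhd ℝ f (Metric.ball (0 : ℍ[ℝ]) 1))
    (hpc : ∀ ξ ∈ Metric.ball (0 : ℍ[ℝ]) 1, Pseudoconformal f ξ)
    (hmaps : Set.MapsTo f (Metric.ball (0 : ℍ[ℝ]) 1) (Metric.ball (0 : ℍ[ℝ]) 1))
    (h0 : f 0 = 0) :
    ∀ z ∈ Metric.ball (0 : ℍ[ℝ]) 1, ‖f z‖ ≤ ‖z‖ :=
  stmt_17_general (by simp [Quaternion.finrank_eq_four]) f han.contDiffOn_of_completeSpace
    (fun ξ hξ => (hpc ξ hξ).conformalAt) hmaps h0
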